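/- (Reproduction of polynomials.) Let K̂ ∈ C_c^∞(ℝⁿ) be supported in |ξ| ≤ 1 with ∂^α K̂(0) = 1 for α = 0 and 0 for α ≠ 0, let K be its entire (inverse) Fourier transform on ℂⁿ, and define S_r f(x) = r^{−n} ∫_{ℝⁿ} K(r^{−1}(x−y)) f(y) dy for 0 < r ≤ 1. Then for every real polynomial p : ℝⁿ → ℝ and every x ∈ ℂⁿ, S_r p(x) = p(x), where p on the right is the polynomial extended to ℂⁿ. -/

import Mathlib

/-!
For fixed `x ∈ ℂⁿ`, put `w = i x / r`. Then `K (r⁻¹ (x - y))` is the inverse Fourier transform of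
the smooth compactly supported function `g = Khat * exp ⟨w, ·⟩`, evaluated at the real point
`u = -y / r`. After this substitution the claim is about the moments of that transform.
Integration by parts (`coord_mul_oscInt`) turns the factor `u j` into `i ∂_j` acting on `g`, and
Fourier inversion at the origin (`integral_oscInt`) says that integrating the transform evaluates
`g` at `0`; hence `∫ p(-r u) ǧ(u) du = p(-i r ∂) g (0)`.

All derivatives of `Khat` of positive order vanish at `0`, so `g` has there the Taylor series of
`exp ⟨w, ·⟩`, and `-i r ∂_j` acts as multiplication by `-i r w j = x j`. Instead of expanding
derivatives of a product, `integral_poly_mul_oscInt` runs by induction on `p` over all `f` that are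
flat at `0` (`IsFlat`): since `∂_j (f * exp ⟨w, ·⟩) = (∂_j f + w j * f) * exp ⟨w, ·⟩`, each
coordinate factor leads to another flat function, whose value at `0` is multiplied by `w j`.
-/

open scoped BigOperators
open MeasureTheory Filter

noncomputable section

/-- Coordinate partial derivative `∂/∂x_j` for functions on `ℝⁿ`. -/
def pderivR {n : ℕ} {F : Type*} [NormedAddCommGroup F] [NormedSpace ℝ F]
    (j : Fin n) (f : (Fin n → ℝ) → F) : (Fin n → ℝ) → F :=
  fun x => fderiv ℝ f x (Pi.single j 1)

/-- Multi-index partial derivative `∂^α` for functions on `ℝⁿ`. -/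
def mderivR {n : ℕ} {F : Type*} [NormedAddCommGroup F] [NormedSpace ℝ F]
    (α : Fin n → ℕ) (f : (Fin n → ℝ) → F) : (Fin n → ℝ) → F :=
  (List.finRange n).foldr (fun j g => (pderivR j)^[α j] g) f

/-- Coordinate partial derivative for functions on `ℂⁿ`. -/
def pderivC {n : ℕ} (j : Fin n) (f : (Fin n → ℂ) → ℂ) : (Fin n → ℂ) → ℂ :=
  fun x => fderiv ℂ f x (Pi.single j 1)

/-- Multi-index complex partial derivative `∂^α` for functions on `ℂⁿ`. -/
def mderivC {n : ℕ} (α : Fin n → ℕ) (f : (Fin n → ℂ) → ℂ) : (Fin n → ℂ) → ℂ :=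
  (List.finRange n).foldr (fun j g => (pderivC j)^[α j] g) f

/-- The finite set of multi-indices `α ∈ ℕⁿ` with `|α| ≤ k`. -/
def multiIdx (n k : ℕ) : Finset (Fin n → ℕ) :=
  ((Finset.univ : Finset (Fin n → Fin (k+1))).image (fun a j => (a j : ℕ))).filter
    (fun α => ∑ j, α j ≤ k)

/-- `ϖ` is a modulus of continuity on `(0, δ]`: positive, nondecreasing, continuous,
`ϖ(0⁺) = 0`, and `limsup_{x→0⁺} x/ϖ(x) < ∞`. -/
def IsModulus (δ : ℝ) (ϖ : ℝ → ℝ) : Prop :=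
  0 < δ ∧ (∀ x ∈ Set.Ioc (0:ℝ) δ, 0 < ϖ x) ∧ MonotoneOn ϖ (Set.Ioc 0 δ) ∧
    ContinuousOn ϖ (Set.Ioc 0 δ) ∧
    Tendsto ϖ (nhdsWithin 0 (Set.Ioi 0)) (nhds 0) ∧
    ∃ C > 0, ∀ᶠ x in nhdsWithin (0:ℝ) (Set.Ioi 0), x / ϖ x ≤ C

/-- Semi separability: `ψ(x) := sup_{0<r<δ/x} ϖ(rx)/ϖ(r) = O(x)` as `x → +∞`. -/
def SemiSeparable (δ : ℝ) (ϖ : ℝ → ℝ) : Prop :=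
  ∃ C > 0, ∃ X₀ ≥ (1:ℝ), ∀ x ≥ X₀, ∀ r > (0:ℝ), r * x < δ → ϖ (r * x) ≤ C * x * ϖ r

/-- Weak homogeneity: for each fixed `0 < a < 1`, `limsup_{x→0⁺} ϖ(x)/ϖ(ax) < ∞`. -/
def WeakHomog (ϖ : ℝ → ℝ) : Prop :=
  ∀ a : ℝ, 0 < a → a < 1 →
    ∃ C > 0, ∀ᶠ x in nhdsWithin (0:ℝ) (Set.Ioi 0), ϖ x ≤ C * ϖ (a * x)

/-- The Hölder-type seminorm `[g]_ϖ` (with respect to the sup-distance). -/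
def hSemi {E F : Type*} [PseudoMetricSpace E] [NormedAddCommGroup F]
    (δ : ℝ) (ϖ : ℝ → ℝ) (g : E → F) : ℝ :=
  sSup {t | ∃ x y : E, 0 < dist x y ∧ dist x y ≤ δ ∧ t = ‖g x - g y‖ / ϖ (dist x y)}

/-- Sup norm of a function. -/
def supNorm {E F : Type*} [NormedAddCommGroup F] (g : E → F) : ℝ :=
  ⨆ x, ‖g x‖

/-- The norm `‖f‖_ϖ = Σ_{|α| ≤ k} ( sup |∂^α f| + [∂^α f]_ϖ )`. -/
def CkNorm {n : ℕ} {F : Type*} [NormedAddCommGroup F] [NormedSpace ℝ F]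
    (k : ℕ) (δ : ℝ) (ϖ : ℝ → ℝ) (f : (Fin n → ℝ) → F) : ℝ :=
  ∑ α ∈ multiIdx n k, (supNorm (mderivR α f) + hSemi δ ϖ (mderivR α f))

/-- Membership in `C_{k,ϖ}(ℝⁿ, F)`: `C^k` with all partial derivatives up to order `k`
bounded and the corresponding `ϖ`-Hölder seminorms finite. -/
def MemCk {n : ℕ} {F : Type*} [NormedAddCommGroup F] [NormedSpace ℝ F]
    (k : ℕ) (δ : ℝ) (ϖ : ℝ → ℝ) (f : (Fin n → ℝ) → F) : Prop :=
  ContDiff ℝ k f ∧ ∀ α ∈ multiIdx n k,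
    BddAbove (Set.range fun x => ‖mderivR α f x‖) ∧
    BddAbove {t | ∃ x y : Fin n → ℝ, 0 < dist x y ∧ dist x y ≤ δ ∧
      t = ‖mderivR α f x - mderivR α f y‖ / ϖ (dist x y)}

/-- Embedding `ℝⁿ ↪ ℂⁿ`. -/
def cplx {n : ℕ} (x : Fin n → ℝ) : Fin n → ℂ := fun j => (x j : ℂ)

def rePart {n : ℕ} (z : Fin n → ℂ) : Fin n → ℝ := fun j => (z j).re

def imPart {n : ℕ} (z : Fin n → ℂ) : Fin n → ℝ := fun j => (z j).im

/-- Taylor polynomial `P_{f,k}(x; y) = Σ_{|β|≤k} ∂^β f(x) y^β / β!` with complex increment. -/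
def taylorCplx {n : ℕ} (f : (Fin n → ℝ) → ℝ) (k : ℕ) (x : Fin n → ℝ) (y : Fin n → ℂ) : ℂ :=
  ∑ β ∈ multiIdx n k,
    ((mderivR β f x : ℝ) : ℂ) * (∏ j, y j ^ β j) / ((∏ j, Nat.factorial (β j) : ℕ) : ℂ)

/-- The convolution operator `S_r f(x) = r^{-n} ∫_{ℝⁿ} K(r^{-1}(x-y)) f(y) dy`, `x ∈ ℂⁿ`. -/
def Sconv {n : ℕ} (K : (Fin n → ℂ) → ℂ) (r : ℝ) (f : (Fin n → ℝ) → ℝ) (x : Fin n → ℂ) : ℂ :=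
  ((r : ℂ) ^ n)⁻¹ * ∫ y : Fin n → ℝ, K ((r : ℂ)⁻¹ • (x - cplx y)) * (f y : ℂ)

/-- The kernel of the Jackson-type approximation theorem: an entire function `K` whose
Fourier transform `K̂` is smooth, supported in the unit ball, even, and satisfies
`K̂(0) = 1`, `∂^α K̂(0) = 0` for `α ≠ 0`. -/
def IsJacksonKernel {n : ℕ} (K : (Fin n → ℂ) → ℂ) (Khat : (Fin n → ℝ) → ℂ) : Prop :=
  (∀ m : ℕ, ContDiff ℝ m Khat) ∧
  (∀ ξ : Fin n → ℝ, 1 < ‖ξ‖ → Khat ξ = 0) ∧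
  (∀ ξ, Khat (-ξ) = Khat ξ) ∧
  Khat 0 = 1 ∧
  (∀ α : Fin n → ℕ, α ≠ 0 → mderivR α Khat 0 = 0) ∧
  ∀ z : Fin n → ℂ, K z =
    (((2 * Real.pi) ^ n : ℝ) : ℂ)⁻¹ *
      ∫ ξ : Fin n → ℝ, Khat ξ * Complex.exp (Complex.I * ∑ j, z j * (ξ j : ℂ))


open scoped ContDiff

/-- The bilinear pairing `∑ j, w j * ξ j` of a complex vector with a real one. -/
def dotC {n : ℕ} (w : Fin n → ℂ) (ξ : Fin n → ℝ) : ℂ := ∑ j, w j * (ξ j : ℂ)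

/-- The inverse Fourier integral `u ↦ ∫ g ξ * exp (i ⟨u, ξ⟩) dξ`, without the factor `(2π)^{-n}`. -/
def oscInt {n : ℕ} (g : (Fin n → ℝ) → ℂ) (u : Fin n → ℝ) : ℂ :=
  ∫ ξ : Fin n → ℝ, g ξ * Complex.exp (dotC (fun j => Complex.I * (u j : ℂ)) ξ)

/-- The iterated partial derivative of `f` along a list of coordinate indices; the last index of the
list is differentiated first. -/
def derivList {n : ℕ} (l : List (Fin n)) (f : (Fin n → ℝ) → ℂ) : (Fin n → ℝ) → ℂ :=
  l.foldr pderivR f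

/-- `f` has the Taylor series of the constant `c` at the origin. -/
def IsFlat {n : ℕ} (f : (Fin n → ℝ) → ℂ) (c : ℂ) : Prop :=
  f 0 = c ∧ ∀ l : List (Fin n), l ≠ [] → derivList l f 0 = 0

/-! ### Iterated partial derivatives and flatness at the origin -/

section Derivatives

variable {n : ℕ} {f g : (Fin n → ℝ) → ℂ}

lemma contDiff_pderivR (hf : ContDiff ℝ ∞ f) (j : Fin n) : ContDiff ℝ ∞ (pderivR j f) :=
  (hf.fderiv_right (m := ∞) (by simp)).clm_apply contDiff_const

lemma hasCompactSupport_pderivR (hf : HasCompactSupport f) (j : Fin n) :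
    HasCompactSupport (pderivR j f) :=
  hf.fderiv_apply ℝ (Pi.single j 1)

lemma contDiff_derivList (hf : ContDiff ℝ ∞ f) (l : List (Fin n)) :
    ContDiff ℝ ∞ (derivList l f) := by
  induction l with
  | nil => exact hf
  | cons j l ih => exact contDiff_pderivR ih j

/-- Symmetry of second derivatives; it makes `derivList` independent of the order of the list. -/
lemma pderivR_comm (hf : ContDiff ℝ ∞ f) (i j : Fin n) :
    pderivR i (pderivR j f) = pderivR j (pderivR i f) := by
  have key : ∀ a b : Fin n, ∀ x, pderivR a (pderivR b f) x
      = fderiv ℝ (fderiv ℝ f) x (Pi.single a 1) (Pi.single b 1) := by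
    intro a b x
    have hd : DifferentiableAt ℝ (fderiv ℝ f) x :=
      (hf.fderiv_right (m := ∞) (by simp)).differentiable (by simp) x
    change fderiv ℝ (fun y => fderiv ℝ f y (Pi.single b 1)) x (Pi.single a 1) = _
    rw [fderiv_clm_apply hd (differentiableAt_const _)]
    simp
  funext x
  rw [key, key]
  exact (hf.contDiffAt.isSymmSndFDerivAt
    (by simpa using WithTop.coe_le_coe.2 (le_top (a := (2 : ℕ∞))))).eq _ _

lemma derivList_perm (hf : ContDiff ℝ ∞ f) {l l' : List (Fin n)} (h : l.Perm l') :
    derivList l f = derivList l' f := by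
  induction h with
  | nil => rfl
  | cons j _ ih => exact congrArg (pderivR j) ih
  | swap i j l => exact pderivR_comm (contDiff_derivList hf l) j i
  | trans _ _ ih₁ ih₂ => exact ih₁.trans ih₂

lemma mderivR_eq_derivList (α : Fin n → ℕ) :
    mderivR α f = derivList ((List.finRange n).flatMap fun j => List.replicate (α j) j) f := by
  unfold mderivR derivList
  induction List.finRange n with
  | nil => rfl
  | cons j l ih =>
    rw [List.foldr_cons, ih, List.flatMap_cons, List.foldr_append]
    generalize List.foldr pderivR f _ = h
    induction α j with
    | zero => rfl
    | succ k ihk => rw [Function.iterate_succ_apply', ihk, List.replicate_succ, List.foldr_cons]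

lemma isFlat_of_mderivR (hf : ContDiff ℝ ∞ f) {c : ℂ} (h0 : f 0 = c)
    (hd : ∀ α : Fin n → ℕ, α ≠ 0 → mderivR α f 0 = 0) : IsFlat f c := by
  refine ⟨h0, fun l hl => ?_⟩
  have hperm : l.Perm ((List.finRange n).flatMap fun j => List.replicate (l.count j) j) := by
    rw [List.perm_iff_count]
    intro a
    rw [List.count_flatMap, List.sum_map_eq_nsmul_single a]
    · simp [List.count_eq_one_of_mem (List.nodup_finRange n) (List.mem_finRange a)]
    · intro b hb _
      simp [List.count_replicate, hb]
  rw [derivList_perm hf hperm, ← mderivR_eq_derivList]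
  refine hd _ fun h => ?_
  obtain ⟨a, l', rfl⟩ := List.exists_cons_of_ne_nil hl
  simpa using congrFun h a

lemma pderivR_add_const_mul (hf : ContDiff ℝ ∞ f) (hg : ContDiff ℝ ∞ g) (a : ℂ) (j : Fin n) :
    pderivR j (fun ξ => f ξ + a * g ξ) = fun ξ => pderivR j f ξ + a * pderivR j g ξ := by
  funext x
  have h1 := hf.differentiable (by simp) x
  have h2 := hg.differentiable (by simp) x
  simp only [pderivR]
  rw [fderiv_fun_add h1 (h2.const_mul a), fderiv_const_mul h2]
  simp

lemma pderivR_const_mul (hg : ContDiff ℝ ∞ g) (a : ℂ) (j : Fin n) :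
    pderivR j (fun ξ => a * g ξ) = fun ξ => a * pderivR j g ξ := by
  funext x
  simp only [pderivR]
  rw [fderiv_const_mul (hg.differentiable (by simp) x)]
  simp

lemma derivList_add_const_mul (hf : ContDiff ℝ ∞ f) (hg : ContDiff ℝ ∞ g) (a : ℂ)
    (l : List (Fin n)) :
    derivList l (fun ξ => f ξ + a * g ξ) = fun ξ => derivList l f ξ + a * derivList l g ξ := by
  induction l with
  | nil => rfl
  | cons j l ih =>
    change pderivR j (derivList l _) = _
    rw [ih, pderivR_add_const_mul (contDiff_derivList hf l) (contDiff_derivList hg l)]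
    rfl

lemma derivList_const_mul (hg : ContDiff ℝ ∞ g) (a : ℂ) (l : List (Fin n)) :
    derivList l (fun ξ => a * g ξ) = fun ξ => a * derivList l g ξ := by
  induction l with
  | nil => rfl
  | cons j l ih =>
    change pderivR j (derivList l _) = _
    rw [ih, pderivR_const_mul (contDiff_derivList hg l)]
    rfl

/-- Flatness survives the operator that differentiation induces on `f` in the product
`f * exp ⟨w, ·⟩` when `a = w j`; the constant is multiplied by `a`. -/
lemma IsFlat.pderivR_add (hf : ContDiff ℝ ∞ f) {c : ℂ} (h : IsFlat f c) (a : ℂ) (j : Fin n) :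
    IsFlat (fun ξ => pderivR j f ξ + a * f ξ) (a * c) := by
  have hj := contDiff_pderivR hf j
  -- Appending `j` makes the list nonempty, so `l = []` is covered too.
  have hl : ∀ l : List (Fin n), derivList l (pderivR j f) 0 = 0 := fun l => by
    have := h.2 (l ++ [j]) (by simp)
    rwa [derivList, List.foldr_append] at this
  refine ⟨?_, fun l hne => ?_⟩
  · have := hl []
    change pderivR j f 0 = 0 at this
    change pderivR j f 0 + a * f 0 = a * c
    rw [this, h.1, zero_add]
  · rw [derivList_add_const_mul hj hf]
    simp only [hl l, h.2 l hne, mul_zero, add_zero]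

lemma IsFlat.const_mul (hf : ContDiff ℝ ∞ f) {c : ℂ} (h : IsFlat f c) (a : ℂ) :
    IsFlat (fun ξ => a * f ξ) (a * c) := by
  refine ⟨by simp only [h.1], fun l hne => ?_⟩
  rw [derivList_const_mul hf]
  simp only [h.2 l hne, mul_zero]

end Derivatives

/-! ### Moments of inverse Fourier integrals -/

section Oscillatory

variable {n : ℕ} {f g : (Fin n → ℝ) → ℂ}

lemma contDiff_exp_dotC (w : Fin n → ℂ) :
    ContDiff ℝ ∞ fun ξ : Fin n → ℝ => Complex.exp (dotC w ξ) := by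
  refine ContDiff.cexp (ContDiff.sum fun j _ => contDiff_const.mul ?_)
  exact Complex.ofRealCLM.contDiff.comp (contDiff_apply ℝ ℝ j)

lemma pderivR_exp_dotC (w : Fin n → ℂ) (j : Fin n) :
    pderivR j (fun ξ => Complex.exp (dotC w ξ)) = fun ξ => w j * Complex.exp (dotC w ξ) := by
  funext x
  have h : HasFDerivAt (dotC w)
      (∑ i, w i • (Complex.ofRealCLM.comp (ContinuousLinearMap.proj (R := ℝ) (φ := fun _ : Fin n => ℝ) i))) x := by
    unfold dotC
    refine HasFDerivAt.fun_sum fun i _ => HasFDerivAt.const_mul ?_ (w i)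
    exact (Complex.ofRealCLM.comp (ContinuousLinearMap.proj (R := ℝ) (φ := fun _ : Fin n => ℝ) i)).hasFDerivAt
  simp only [pderivR]
  rw [h.cexp.fderiv]
  simp [Pi.single_apply, apply_ite Complex.ofReal, mul_comm]

lemma pderivR_mul_exp_dotC (hf : ContDiff ℝ ∞ f) (w : Fin n → ℂ) (j : Fin n) :
    pderivR j (fun ξ => f ξ * Complex.exp (dotC w ξ))
      = fun ξ => (pderivR j f ξ + w j * f ξ) * Complex.exp (dotC w ξ) := by
  funext x
  have h1 := hf.differentiable (by simp) x
  have h2 := (contDiff_exp_dotC w).differentiable (by simp) x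
  have h3 := congrFun (pderivR_exp_dotC w j) x
  simp only [pderivR] at h3 ⊢
  rw [fderiv_fun_mul h1 h2]
  simp only [add_apply, smul_apply, h3, smul_eq_mul]
  ring

/-- Integration by parts: multiplication by a coordinate becomes `i ∂_j` under the integral. -/
lemma coord_mul_oscInt (hg : ContDiff ℝ ∞ g) (hc : HasCompactSupport g) (j : Fin n)
    (u : Fin n → ℝ) :
    (u j : ℂ) * oscInt g u = oscInt (fun ξ => Complex.I * pderivR j g ξ) u := by
  set w : Fin n → ℂ := fun j => Complex.I * (u j : ℂ) with hw
  have he := contDiff_exp_dotC w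
  have hi : ∀ {h k : (Fin n → ℝ) → ℂ}, ContDiff ℝ ∞ h → HasCompactSupport h → ContDiff ℝ ∞ k →
      Integrable fun ξ => h ξ * k ξ := fun h1 h2 h3 =>
    (h1.continuous.mul h3.continuous).integrable_of_hasCompactSupport h2.mul_right
  have key := integral_mul_fderiv_eq_neg_fderiv_mul_of_integrable (μ := volume)
    (f := g) (g := fun ξ => Complex.exp (dotC w ξ)) (v := Pi.single j 1)
    (hi (contDiff_pderivR hg j) (hasCompactSupport_pderivR hc j) he)
    (hi hg hc (contDiff_pderivR he j)) (hi hg hc he)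
    (fun x _ => hg.differentiable (by simp) x) (fun x _ => he.differentiable (by simp) x)
  have h3 : ∀ x, fderiv ℝ (fun ξ => Complex.exp (dotC w ξ)) x (Pi.single j 1)
      = w j * Complex.exp (dotC w x) := congrFun (pderivR_exp_dotC w j)
  simp only [h3] at key
  have e1 : ∫ x, g x * (w j * Complex.exp (dotC w x)) = w j * oscInt g u := by
    rw [oscInt, ← integral_const_mul]
    congr 1; funext x; ring
  have e2 : oscInt (fun ξ => Complex.I * pderivR j g ξ) u
      = Complex.I * ∫ x, fderiv ℝ g x (Pi.single j 1) * Complex.exp (dotC w x) := by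
    rw [oscInt, ← integral_const_mul]
    congr 1; funext x; simp only [pderivR]; ring
  rw [e1] at key
  rw [e2, ← neg_eq_iff_eq_neg.mpr key, hw]
  linear_combination ((u j : ℂ) * oscInt g u) * Complex.I_sq

open FourierTransform in
/-- Fourier inversion at the origin. In Mathlib's normalization `oscInt g (2π v)` is the inverse
Fourier transform at `v` of `g`, viewed as a Schwartz function on Euclidean space. -/
lemma integral_oscInt (hg : ContDiff ℝ ∞ g) (hc : HasCompactSupport g) :
    Integrable (oscInt g) ∧ ∫ u, oscInt g u = (((2 * Real.pi) ^ n : ℝ) : ℂ) * g 0 := by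
  let e : EuclideanSpace ℝ (Fin n) ≃L[ℝ] (Fin n → ℝ) := EuclideanSpace.equiv (Fin n) ℝ
  have hG1 : HasCompactSupport (g ∘ e) := hc.comp_homeomorph e.toHomeomorph
  have hG2 : ContDiff ℝ ∞ (g ∘ e) := hg.comp e.contDiff
  let G : SchwartzMap (EuclideanSpace ℝ (Fin n)) ℂ := hG1.toSchwartzMap hG2
  have hG : ∀ v, G v = g (e v) := fun v => rfl
  have hmp := PiLp.volume_preserving_ofLp (Fin n)
  have hemb : MeasurableEmbedding (@WithLp.ofLp 2 (Fin n → ℝ)) :=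
    (MeasurableEquiv.toLp 2 (Fin n → ℝ)).symm.measurableEmbedding
  have hosc : ∀ v : EuclideanSpace ℝ (Fin n),
      oscInt g ((2 * Real.pi) • WithLp.ofLp v) = (𝓕⁻ G) v := by
    intro v
    rw [SchwartzMap.fourierInv_coe, Real.fourierInv_eq', oscInt, ← hmp.integral_comp hemb]
    congr 1; funext ξ
    rw [hG, smul_eq_mul, mul_comm]
    congr 2
    simp [dotC, PiLp.inner_apply, Finset.mul_sum, Finset.sum_mul]
    refine Finset.sum_congr rfl fun i _ => ?_
    ring
  have hpi : (2 * Real.pi) ≠ 0 := by positivity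
  have hint : Integrable fun u : Fin n → ℝ => oscInt g ((2 * Real.pi) • u) := by
    rw [← hmp.integrable_comp_emb hemb]
    exact (𝓕⁻ G).integrable.congr (Filter.Eventually.of_forall fun v => (hosc v).symm)
  have hval : ∫ u : Fin n → ℝ, oscInt g ((2 * Real.pi) • u) = g 0 := by
    rw [← hmp.integral_comp hemb]
    simp only [hosc]
    have h1 : 𝓕 (𝓕⁻ G) 0 = G 0 := by rw [FourierTransform.fourier_fourierInv_eq]
    rw [SchwartzMap.fourier_coe, Real.fourier_eq] at h1
    simpa [hG] using h1
  refine ⟨(integrable_comp_smul_iff volume _ hpi).1 hint, ?_⟩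
  rw [Measure.integral_comp_smul_of_nonneg _ _ _ (hR := by positivity)] at hval
  rw [← hval]
  simp [Complex.real_smul, Real.pi_ne_zero]

/-- The moments of `oscInt (f * exp ⟨w, ·⟩)` depend only on the Taylor series of `f * exp ⟨w, ·⟩` at
the origin, which for flat `f` is that of `c * exp ⟨w, ·⟩`. The induction on `p` needs `f` and `c` to
vary: a factor `X j` replaces `f` by a multiple of `∂_j f + w j * f`. -/
lemma integral_poly_mul_oscInt (w : Fin n → ℂ) (a : ℝ) (p : MvPolynomial (Fin n) ℝ) :
    ∀ (f : (Fin n → ℝ) → ℂ) (c : ℂ), ContDiff ℝ ∞ f → HasCompactSupport f → IsFlat f c →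
      Integrable (fun u => oscInt (fun ξ => f ξ * Complex.exp (dotC w ξ)) u
        * (MvPolynomial.eval (a • u) p : ℂ)) ∧
      ∫ u, oscInt (fun ξ => f ξ * Complex.exp (dotC w ξ)) u * (MvPolynomial.eval (a • u) p : ℂ)
        = (((2 * Real.pi) ^ n : ℝ) : ℂ) * c
          * MvPolynomial.aeval (fun j => (a : ℂ) * Complex.I * w j) p := by
  induction p using MvPolynomial.induction_on with
  | C b =>
    intro f c hf hc hflat
    obtain ⟨h1, h2⟩ := integral_oscInt (hf.mul (contDiff_exp_dotC w)) hc.mul_right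
    simp only [MvPolynomial.eval_C, MvPolynomial.aeval_C]
    refine ⟨h1.mul_const _, ?_⟩
    rw [integral_mul_const, h2, hflat.1]
    simp [dotC]
  | add p q ihp ihq =>
    intro f c hf hc hflat
    obtain ⟨p1, p2⟩ := ihp f c hf hc hflat
    obtain ⟨q1, q2⟩ := ihq f c hf hc hflat
    simp only [map_add, Complex.ofReal_add, mul_add]
    exact ⟨p1.add q1, by rw [integral_add p1 q1, p2, q2]⟩
  | mul_X p j ih =>
    intro f c hf hc hflat
    have hf₁ : ContDiff ℝ ∞ fun ξ => pderivR j f ξ + w j * f ξ :=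
      (contDiff_pderivR hf j).add (contDiff_const.mul hf)
    have hc₁ : HasCompactSupport fun ξ => pderivR j f ξ + w j * f ξ :=
      (hasCompactSupport_pderivR hc j).add hc.mul_left
    obtain ⟨h1, h2⟩ := ih (fun ξ => (a * Complex.I) * (pderivR j f ξ + w j * f ξ)) _
      (contDiff_const.mul hf₁) hc₁.mul_left ((hflat.pderivR_add hf (w j) j).const_mul hf₁ _)
    have key : ∀ u, oscInt (fun ξ => (a * Complex.I) * (pderivR j f ξ + w j * f ξ)
          * Complex.exp (dotC w ξ)) u
        = oscInt (fun ξ => f ξ * Complex.exp (dotC w ξ)) u * (a * u j : ℂ) := by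
      intro u
      have := coord_mul_oscInt (hf.mul (contDiff_exp_dotC w)) hc.mul_right j u
      rw [pderivR_mul_exp_dotC hf] at this
      rw [show ∀ z : ℂ, z * (a * u j) = a * (u j * z) from fun z => by ring, this, oscInt, oscInt,
        ← integral_const_mul]
      congr 1; funext ξ; ring
    have hfun : (fun u => oscInt (fun ξ => f ξ * Complex.exp (dotC w ξ)) u
          * (MvPolynomial.eval (a • u) (p * MvPolynomial.X j) : ℂ))
        = fun u => oscInt (fun ξ => (a * Complex.I) * (pderivR j f ξ + w j * f ξ)
          * Complex.exp (dotC w ξ)) u * (MvPolynomial.eval (a • u) p : ℂ) := by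
      funext u
      rw [key]
      simp only [map_mul, MvPolynomial.eval_X, Pi.smul_apply, smul_eq_mul, Complex.ofReal_mul]
      ring
    rw [hfun]
    refine ⟨h1, h2.trans ?_⟩
    rw [map_mul, MvPolynomial.aeval_X]
    ring

end Oscillatory

/-- reproduction of polynomials. For the Jackson kernel `K` (with
`K̂ ∈ C_c^∞` supported in the unit ball, `K̂(0) = 1`, `∂^α K̂(0) = 0` for `α ≠ 0`),
the convolution operators satisfy `S_r p = p` (as entire functions on `ℂⁿ`) for every
real polynomial `p`. -/
theorem kernel_reproduces_polynomials (n : ℕ) (hn : 0 < n)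
    (Khat : (Fin n → ℝ) → ℂ) (hsmooth : ∀ m : ℕ, ContDiff ℝ m Khat)
    (hsupp : ∀ ξ : Fin n → ℝ, 1 < ‖ξ‖ → Khat ξ = 0)
    (hK0 : Khat 0 = 1)
    (hKd : ∀ α : Fin n → ℕ, α ≠ 0 → mderivR α Khat 0 = 0)
    (K : (Fin n → ℂ) → ℂ)
    (hK : ∀ z : Fin n → ℂ, K z =
      (((2 * Real.pi) ^ n : ℝ) : ℂ)⁻¹ *
        ∫ ξ : Fin n → ℝ, Khat ξ * Complex.exp (Complex.I * ∑ j, z j * (ξ j : ℂ)))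
    (p : MvPolynomial (Fin n) ℝ) (r : ℝ) (hr : r ∈ Set.Ioc (0:ℝ) 1) (x : Fin n → ℂ) :
    Sconv K r (fun y => MvPolynomial.eval y p) x = MvPolynomial.aeval x p := by
  have hr0 : r ≠ 0 := hr.1.ne'
  have hrC : (r : ℂ) ≠ 0 := Complex.ofReal_ne_zero.mpr hr0
  have hsm : ContDiff ℝ ∞ Khat := contDiff_infty.2 hsmooth
  have hcs : HasCompactSupport Khat :=
    HasCompactSupport.intro (isCompact_closedBall 0 1) fun ξ hξ => hsupp ξ (by simpa using hξ)
  -- With this `w`, `K (r⁻¹ (x - y))` is the inverse Fourier transform of `Khat * exp ⟨w, ·⟩` at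
  -- `u = -r⁻¹ y`, so that `y = -r u`.
  set w : Fin n → ℂ := fun j => Complex.I * ((r : ℂ)⁻¹ * x j) with hw
  have hmain := (integral_poly_mul_oscInt w (-r) p Khat 1 hsm hcs
    (isFlat_of_mderivR hsm hK0 hKd)).2
  have hx : (fun j => ((-r : ℝ) : ℂ) * Complex.I * w j) = x := by
    funext j
    simp only [hw, Complex.ofReal_neg]
    field_simp
    simp
  rw [hx, mul_one] at hmain
  have hpi : (((2 * Real.pi) ^ n : ℝ) : ℂ) ≠ 0 :=
    Complex.ofReal_ne_zero.mpr (by positivity)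
  have hKu : ∀ y : Fin n → ℝ, K ((r : ℂ)⁻¹ • (x - cplx y)) = (((2 * Real.pi) ^ n : ℝ) : ℂ)⁻¹
      * oscInt (fun ξ => Khat ξ * Complex.exp (dotC w ξ)) ((-r)⁻¹ • y) := by
    intro y
    rw [hK, oscInt]
    congr 2; funext ξ
    rw [mul_assoc, ← Complex.exp_add]
    congr 2
    simp only [dotC, ← Finset.sum_add_distrib, Finset.mul_sum]
    refine Finset.sum_congr rfl fun j _ => ?_
    simp [hw, cplx]
    ring
  have hcv := Measure.integral_comp_smul (volume : Measure (Fin n → ℝ))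
    (fun u => oscInt (fun ξ => Khat ξ * Complex.exp (dotC w ξ)) u
      * (MvPolynomial.eval ((-r) • u) p : ℂ)) (-r)⁻¹
  rw [hmain] at hcv
  simp only [smul_inv_smul₀ (neg_ne_zero.mpr hr0)] at hcv
  have habs : |((-r)⁻¹ ^ Module.finrank ℝ (Fin n → ℝ))⁻¹| = r ^ n := by
    simp [abs_inv, abs_pow, abs_of_pos hr.1]
  rw [habs] at hcv
  simp only [Sconv, hKu, mul_assoc]
  rw [integral_const_mul, hcv, Complex.real_smul, Complex.ofReal_pow r n]
  field_simp
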